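/- arXiv:2406.11787 — 6 statements merged into one kernel-verified Lean document; each statement's English description precedes it below -/
import Mathlib

section
/- Let n ≥ 1 be an integer. Then in ℚ[X], the polynomial X^n − 1 divides (Σ_{k ∣ n} ψ_{n,k}) − 1, where the sum ranges over the positive divisors k of n. In other words, Σ_{k ∣ n} ψ_{n,k} ≡ 1 mod (X^n − 1). -/
open Polynomial

/-- For a positive divisor `k` of `n`, the idempotent polynomial
`ψ_{n,k} := (1/n) · X · Φ_k′ · ∏_{k′ ∣ n, k′ ≠ k} Φ_{k′} ∈ ℚ[X]`. -/
noncomputable def psi (n k : ℕ) : Polynomial ℚ :=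
  C ((n : ℚ))⁻¹ * (X * derivative (cyclotomic k ℚ) *
    ∏ k' ∈ n.divisors.erase k, cyclotomic k' ℚ)

theorem X_mul_derivative_X_pow (R : Type*) [Semiring R] (n : ℕ) :
    X * derivative (X ^ n : R[X]) = C (n : R) * X ^ n := by
  rcases eq_or_ne n 0 with rfl | hn
  · simp
  · rw [derivative_X_pow, X_mul, mul_assoc, pow_sub_one_mul hn]

theorem sum_derivative_cyclotomic_mul_prod_erase (R : Type*) [CommRing R] {n : ℕ} (hn : 0 < n) :
    ∑ k ∈ n.divisors, derivative (cyclotomic k R) * ∏ k' ∈ n.divisors.erase k, cyclotomic k' R =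
      derivative (X ^ n - 1) := by
  rw [← prod_cyclotomic_eq_X_pow_sub_one hn R, derivative_prod_finset]
  exact Finset.sum_congr rfl fun _ _ => mul_comm _ _

theorem sum_psi_eq_X_pow {n : ℕ} (hn : 0 < n) : ∑ k ∈ n.divisors, psi n k = X ^ n := by
  have hn_ne : (n : ℚ) ≠ 0 := Nat.cast_ne_zero.mpr hn.ne'
  calc
    ∑ k ∈ n.divisors, psi n k
      = C (n : ℚ)⁻¹ * (X * ∑ k ∈ n.divisors, derivative (cyclotomic k ℚ) *
          ∏ k' ∈ n.divisors.erase k, cyclotomic k' ℚ) := by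
        simp only [psi, Finset.mul_sum, mul_assoc]
    _ = C (n : ℚ)⁻¹ * (C (n : ℚ) * X ^ n) := by
        rw [sum_derivative_cyclotomic_mul_prod_erase ℚ hn, derivative_sub, derivative_one, sub_zero,
          X_mul_derivative_X_pow]
    _ = X ^ n := by
        rw [← mul_assoc, ← C_mul, inv_mul_cancel₀ hn_ne, C_1, one_mul]

/-- In `ℚ[X]`, `X^n − 1` divides `(Σ_{k ∣ n} ψ_{n,k}) − 1`. -/
theorem stmt_1 (n : ℕ) (hn : 1 ≤ n) :
    (X ^ n - 1 : Polynomial ℚ) ∣ (∑ k ∈ n.divisors, psi n k) - 1 := by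
  rw [sum_psi_eq_X_pow hn]
end

section
/- Let n ≥ 1 be an integer and let k be a positive divisor of n. Then in ℚ[X], the polynomial X^n − 1 divides ψ_{n,k}² − ψ_{n,k}; that is, the image of ψ_{n,k} in ℚ[X]/(X^n − 1) is an idempotent element. -/
open Polynomial

/-!
Write `X ^ n - 1 = Φ * Q` with `Φ` the `k`-th cyclotomic polynomial. By the Leibniz rule,
`(1/n) X (Φ * Q)′ = (1/n) X Φ′ Q + (1/n) X Φ Q′` and the left side is `X ^ n`, which is `1` modulo
`X ^ n - 1`. The two summands on the right thus add up to `1` there, and their product is a multiple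
of `Φ * Q`, so they are complementary idempotents; the first one is `ψ_{n,k}`.
-/

section

variable {R : Type*} [CommRing R]

theorem dvd_sq_sub_self_of_dvd_add_sub_one_of_dvd_mul {m a b : R}
    (h_add : m ∣ a + b - 1) (h_mul : m ∣ a * b) : m ∣ a ^ 2 - a := by
  have h_eq : a ^ 2 - a = a * (a + b - 1) - a * b := by ring
  rw [h_eq]
  exact dvd_sub (h_add.mul_left a) h_mul

theorem mul_dvd_sq_sub_self_of_dvd_mul_derivative_sub_one {u p q : R[X]}
    (hu : p * q ∣ u * derivative (p * q) - 1) :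
    p * q ∣ (u * derivative p * q) ^ 2 - u * derivative p * q := by
  have leibniz : u * derivative p * q + u * p * derivative q = u * derivative (p * q) := by
    rw [derivative_mul]
    ring
  have h_mul : p * q ∣ (u * derivative p * q) * (u * p * derivative q) :=
    ⟨u ^ 2 * derivative p * derivative q, by ring⟩
  exact dvd_sq_sub_self_of_dvd_add_sub_one_of_dvd_mul (leibniz ▸ hu) h_mul

theorem X_mul_derivative_X_pow_sub_one (n : ℕ) :
    X * derivative (X ^ n - 1 : R[X]) = C (n : R) * X ^ n := by
  cases n with
  | zero => simp
  | succ n =>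
    rw [derivative_sub, derivative_X_pow, derivative_one, Nat.add_sub_cancel]
    ring

theorem X_pow_sub_one_dvd_C_mul_X_mul_derivative_sub_one {n : ℕ} {c : R} (hc : c * n = 1) :
    (X ^ n - 1 : R[X]) ∣ C c * X * derivative (X ^ n - 1) - 1 := by
  rw [mul_assoc, X_mul_derivative_X_pow_sub_one, ← mul_assoc, ← C_mul, hc, C_1, one_mul]

theorem cyclotomic_mul_prod_divisors_erase {n k : ℕ} (hk : k ∈ n.divisors) :
    cyclotomic k R * ∏ d ∈ n.divisors.erase k, cyclotomic d R = X ^ n - 1 := by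
  rw [Finset.mul_prod_erase _ (fun d ↦ cyclotomic d R) hk,
    prod_cyclotomic_eq_X_pow_sub_one (Nat.pos_of_ne_zero (Nat.mem_divisors.mp hk).2)]

end

/-- For a positive divisor `k` of `n`, `X^n − 1` divides `ψ_{n,k}² − ψ_{n,k}` in `ℚ[X]`,
that is, the image of `ψ_{n,k}` in `ℚ[X]/(X^n − 1)` is idempotent. -/
theorem stmt_3 (n k : ℕ) (hn : 1 ≤ n) (hk : k ∈ n.divisors) :
    (X ^ n - 1 : Polynomial ℚ) ∣ psi n k ^ 2 - psi n k := by
  have factor := cyclotomic_mul_prod_divisors_erase (R := ℚ) hk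
  have h_inv : (n : ℚ)⁻¹ * n = 1 := inv_mul_cancel₀ (by positivity)
  have h_unit := X_pow_sub_one_dvd_C_mul_X_mul_derivative_sub_one h_inv
  rw [← factor] at h_unit ⊢
  simpa only [psi, mul_assoc] using mul_dvd_sq_sub_self_of_dvd_mul_derivative_sub_one h_unit
end

section
/- Let n ≥ 1 be an integer, let k be a positive divisor of n, and let ξ ∈ ℂ satisfy ξ^n = 1. Then ψ_{n,k}(ξ) = 1 if the multiplicative order of ξ equals k, and ψ_{n,k}(ξ) = 0 otherwise. (Equivalently, the character of ψ_{n,k} on ℤ/n is the characteristic function of the set of elements of ℤ/n of order exactly k.) -/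
open Polynomial

/-!
Differentiating `X ^ n - 1 = Φ_k * ∏_{k' ≠ k} Φ_{k'}` and evaluating at a root `ξ` of `Φ_k` kills
one of the two terms of the Leibniz rule; the other one, multiplied by `ξ / n`, is `ψ_{n,k}(ξ)`,
while the derivative of `X ^ n - 1` contributes `ξ * (n * ξ ^ (n - 1)) / n = 1`. If instead `ξ` has
order `k' ≠ k`, then the factor `Φ_{k'}` of `ψ_{n,k}` vanishes at `ξ`.
-/

section DerivativeAtRoot

variable {R A : Type*}

theorem aeval_derivative_mul_of_aeval_eq_zero [CommSemiring R] [Semiring A] [Algebra R A]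
    {p : R[X]} (q : R[X]) {x : A} (hp : aeval x p = 0) :
    aeval x (derivative (p * q)) = aeval x (derivative p) * aeval x q := by
  rw [derivative_mul, map_add, map_mul, map_mul, hp, zero_mul, add_zero]

theorem mul_aeval_derivative_X_pow_sub_one [CommRing R] [Ring A] [Algebra R A]
    {n : ℕ} (hn : n ≠ 0) {ξ : A} (hξ : ξ ^ n = 1) :
    ξ * aeval ξ (derivative (X ^ n - 1 : R[X])) = n := by
  calc ξ * aeval ξ (derivative (X ^ n - 1 : R[X]))
      = ξ * (n * ξ ^ (n - 1)) := by simp [derivative_X_pow]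
    _ = n * (ξ * ξ ^ (n - 1)) := (Nat.cast_commute n ξ).symm.left_comm _
    _ = n := by rw [mul_pow_sub_one hn, hξ, mul_one]

end DerivativeAtRoot

section CyclotomicRoot

variable {R A : Type*} [CommRing R] [Ring A] [Algebra R A]

theorem pow_eq_one_of_aeval_cyclotomic_eq_zero {d : ℕ} {ξ : A}
    (hξ : aeval ξ (cyclotomic d R) = 0) : ξ ^ d = 1 := by
  have h : aeval ξ (X ^ d - 1 : R[X]) = 0 :=
    aeval_eq_zero_of_dvd_aeval_eq_zero (cyclotomic.dvd_X_pow_sub_one d R) hξ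
  simpa [sub_eq_zero] using h

-- `A` need not be commutative, so this is not an instance of `IsPrimitiveRoot.isRoot_cyclotomic`.
theorem aeval_cyclotomic_orderOf_eq_zero [IsDomain A] {ξ : A} (hξ : IsOfFinOrder ξ) :
    aeval ξ (cyclotomic (orderOf ξ) R) = 0 := by
  have hprod : ∏ d ∈ (orderOf ξ).divisors, cyclotomic d R ∈ RingHom.ker (aeval (R := R) ξ) := by
    rw [prod_cyclotomic_eq_X_pow_sub_one hξ.orderOf_pos, RingHom.mem_ker]
    simp [pow_orderOf_eq_one]
  obtain ⟨d, hd, hdξ⟩ := (RingHom.ker_isPrime (aeval (R := R) ξ)).prod_mem_iff.mp hprod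
  have hdvd : orderOf ξ ∣ d :=
    orderOf_dvd_of_pow_eq_one (pow_eq_one_of_aeval_cyclotomic_eq_zero hdξ)
  rwa [Nat.dvd_antisymm (Nat.dvd_of_mem_divisors hd) hdvd] at hdξ

theorem mul_aeval_derivative_cyclotomic_mul_aeval_prod_erase {n k : ℕ} (hk : k ∈ n.divisors)
    {ξ : A} (hξ : aeval ξ (cyclotomic k R) = 0) :
    ξ * (aeval ξ (derivative (cyclotomic k R)) *
      aeval ξ (∏ d ∈ n.divisors.erase k, cyclotomic d R)) = n := by
  obtain ⟨hkn, hn⟩ := Nat.mem_divisors.mp hk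
  have hpow : ξ ^ n = 1 := orderOf_dvd_iff_pow_eq_one.mp <|
    (orderOf_dvd_of_pow_eq_one (pow_eq_one_of_aeval_cyclotomic_eq_zero hξ)).trans hkn
  rw [← aeval_derivative_mul_of_aeval_eq_zero _ hξ, Finset.mul_prod_erase _ (cyclotomic · R) hk,
    prod_cyclotomic_eq_X_pow_sub_one hn.bot_lt, mul_aeval_derivative_X_pow_sub_one hn hpow]

end CyclotomicRoot

section Psi

variable {A : Type*} [Ring A] [Algebra ℚ A] {n k : ℕ} {ξ : A}

theorem aeval_psi_eq_one (hk : k ∈ n.divisors) (hξ : aeval ξ (cyclotomic k ℚ) = 0) :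
    aeval ξ (psi n k) = 1 := by
  have hn : (n : ℚ) ≠ 0 := Nat.cast_ne_zero.mpr (Nat.mem_divisors.mp hk).2
  rw [psi, map_mul, aeval_C, map_mul, map_mul, aeval_X, mul_assoc,
    mul_aeval_derivative_cyclotomic_mul_aeval_prod_erase hk hξ, ← map_natCast (algebraMap ℚ A),
    ← map_mul, inv_mul_cancel₀ hn, map_one]

theorem aeval_psi_eq_zero {d : ℕ} (hd : d ∈ n.divisors) (hdk : d ≠ k)
    (hξ : aeval ξ (cyclotomic d ℚ) = 0) : aeval ξ (psi n k) = 0 := by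
  have hdvd : cyclotomic d ℚ ∣ psi n k :=
    ((Finset.dvd_prod_of_mem _ (Finset.mem_erase.mpr ⟨hdk, hd⟩)).mul_left _).mul_left _
  exact aeval_eq_zero_of_dvd_aeval_eq_zero hdvd hξ

theorem stmt_5_general [IsDomain A] (k : ℕ) (hn : n ≠ 0) (hξ : ξ ^ n = 1) :
    aeval ξ (psi n k) = if orderOf ξ = k then 1 else 0 := by
  have hmem : orderOf ξ ∈ n.divisors := Nat.mem_divisors.mpr ⟨orderOf_dvd_of_pow_eq_one hξ, hn⟩
  have hroot : aeval ξ (cyclotomic (orderOf ξ) ℚ) = 0 :=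
    aeval_cyclotomic_orderOf_eq_zero (isOfFinOrder_iff_pow_eq_one.mpr ⟨n, hn.bot_lt, hξ⟩)
  split_ifs with hk
  · subst hk
    exact aeval_psi_eq_one hmem hroot
  · exact aeval_psi_eq_zero hmem hk hroot

end Psi

/-- If `ξ ∈ ℂ` satisfies `ξ^n = 1` and `k` is a positive divisor of `n`, then
`ψ_{n,k}(ξ) = 1` when the multiplicative order of `ξ` equals `k`, and `ψ_{n,k}(ξ) = 0`
otherwise. -/
theorem stmt_5 (n k : ℕ) (hn : 1 ≤ n) (hk : k ∈ n.divisors) (ξ : ℂ) (hξ : ξ ^ n = 1) :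
    Polynomial.aeval ξ (psi n k) = if orderOf ξ = k then 1 else 0 :=
  stmt_5_general k (Nat.one_le_iff_ne_zero.mp hn) hξ
end

section
/- Let n ≥ 1 be an integer and let k and l be two distinct positive divisors of n. Then the cyclotomic polynomials Φ_k and Φ_l are coprime in R[X] (they generate the unit ideal), where R = ℤ[1/n] is the localization of ℤ away from n. -/
open Polynomial

/-!
If `n` is invertible in `R`, then `X ^ n - 1` is separable over `R`, since its derivative
`n * X ^ (n - 1)` is coprime to it. Distinct factors of a separable product are coprime, and the
`Φ_d` with `d ∣ n` are the factors of `X ^ n - 1 = ∏ d ∣ n, Φ_d`.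
-/

theorem pairwise_isCoprime_of_separable_prod {ι R : Type*} [CommSemiring R] {s : Finset ι}
    {f : ι → R[X]} (h : (∏ i ∈ s, f i).Separable) :
    (s : Set ι).Pairwise fun i j => IsCoprime (f i) (f j) := by
  classical
  intro i hi j hj hij
  have hdvd : f i * f j ∣ ∏ a ∈ s, f a := by
    rw [← Finset.prod_pair hij]
    exact Finset.prod_dvd_prod_of_subset _ _ f
      (Finset.insert_subset hi (Finset.singleton_subset_iff.2 hj))
  exact (h.of_dvd hdvd).isCoprime

theorem separable_X_pow_sub_one_of_isUnit {R : Type*} [CommRing R] {n : ℕ}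
    (hn : IsUnit (n : R)) : (X ^ n - 1 : R[X]).Separable := by
  simpa only [Units.val_one, C_1] using separable_X_pow_sub_C_unit 1 hn

theorem isUnit_natCast_of_isLocalizationAway (R : Type*) {S : Type*} [CommSemiring R]
    [CommSemiring S] [Algebra R S] {n : ℕ} [IsLocalization.Away (n : R) S] : IsUnit (n : S) := by
  simpa only [map_natCast] using IsLocalization.Away.algebraMap_isUnit (S := S) (n : R)

theorem stmt_6_general {R : Type*} [CommRing R] {n k l : ℕ} (hn : IsUnit (n : R))
    (hk : k ∈ n.divisors) (hl : l ∈ n.divisors) (hkl : k ≠ l) :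
    IsCoprime (cyclotomic k R) (cyclotomic l R) := by
  have hsep : (∏ d ∈ n.divisors, cyclotomic d R).Separable := by
    rw [prod_cyclotomic_eq_X_pow_sub_one (Nat.pos_of_ne_zero (Nat.ne_zero_of_mem_divisors hk))]
    exact separable_X_pow_sub_one_of_isUnit hn
  exact pairwise_isCoprime_of_separable_prod hsep hk hl hkl

/-- For distinct positive divisors `k`, `l` of `n`, the cyclotomic polynomials `Φ_k` and
`Φ_l` are coprime over `R = ℤ[1/n]`, the localization of `ℤ` away from `n`. -/
theorem stmt_6 (n k l : ℕ) (hn : 1 ≤ n) (hk : k ∈ n.divisors) (hl : l ∈ n.divisors)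
    (hkl : k ≠ l) :
    IsCoprime (cyclotomic k (Localization.Away (n : ℤ)))
      (cyclotomic l (Localization.Away (n : ℤ))) :=
  stmt_6_general (isUnit_natCast_of_isLocalizationAway ℤ) hk hl hkl
end

section
/- Let n ≥ 1 be an integer, let ϑ_n ∈ ℂ be a primitive n-th root of unity, and let D = ℤ[ϑ_n] be the subring of ℂ generated by ϑ_n (the ring of integers of the n-th cyclotomic field). Then a countable D-module M is projective as a D-module if and only if the underlying additive group of M is a free abelian group. -/
/-!
By Kaplansky's theorem, a submodule of a direct sum of hereditary modules is a direct sum of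
submodules of the summands: well-order the summands and split off, one index at a time, the
leading coefficients, which form a projective module. Over a principal ideal domain this shows
that submodules of free modules are free; a projective `D`-module embeds into a free `D`-module,
which is free over `ℤ`, so it is free over `ℤ` too.

Conversely let `M` be free over `ℤ`. Each coordinate `φ : M → ℤ` yields a `D`-linear map
`m ↦ (d ↦ φ (d • m))` from `M` to `Hom(D, ℤ)`, whose image is finitely generated and torsion-free,
hence hereditary because `D` is a Dedekind domain. As `D` is finite over `ℤ`, only finitely many
of these maps are nonzero at a given `m`, so they embed `M` into a direct sum of hereditary
modules, and `M` is projective.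
-/

open DirectSum IntermediateField

section Hereditary

/-- A module is hereditary if all its submodules are projective. A ring is (left) hereditary
exactly when it is so as a module over itself. -/
def IsHereditaryModule (R M : Type*) [Ring R] [AddCommGroup M] [Module R M] : Prop :=
  ∀ N : Submodule R M, Module.Projective R N

variable {R M ι : Type*} {P : ι → Type*} [Ring R] [AddCommGroup M] [Module R M]
  [∀ i, AddCommGroup (P i)] [∀ i, Module R (P i)]

section LeadingCoeff

variable [LinearOrder ι] (g : ∀ i, M →ₗ[R] P i)

/-- The elements of degree at most `i`: the maps `g j` are regarded as coordinates on `M`, and the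
degree of an element is its last index with a nonzero coordinate. -/
def degreeLE (i : ι) : Submodule R M := ⨅ j > i, LinearMap.ker (g j)

/-- The leading coefficients in degree `i`, that is, the `i`-th coordinates of the elements of
degree at most `i`. They are the summands in the decomposition of `M`. -/
def leadingCoeffs (i : ι) : Submodule R (P i) := (degreeLE g i).map (g i)

variable {g}

lemma mem_degreeLE {i : ι} {m : M} : m ∈ degreeLE g i ↔ ∀ j > i, g j m = 0 := by
  simp [degreeLE]

lemma exists_section_leadingCoeffs {i : ι} (hP : IsHereditaryModule R (P i)) :
    ∃ s : leadingCoeffs g i →ₗ[R] M, (∀ x, s x ∈ degreeLE g i) ∧ ∀ x, g i (s x) = x := by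
  have : Module.Projective R ((degreeLE g i).map (g i)) := hP _
  obtain ⟨s, hs⟩ := Module.projective_lifting_property
    ((g i).submoduleMap (degreeLE g i)) LinearMap.id ((g i).submoduleMap_surjective _)
  exact ⟨(degreeLE g i).subtype ∘ₗ s, fun x ↦ (s x).2,
    fun x ↦ congrArg Subtype.val (LinearMap.congr_fun hs x)⟩

lemma exists_mem_degreeLE {m : M} (hfin : {i | g i m ≠ 0}.Finite) (hm : ∃ i, g i m ≠ 0) :
    ∃ i, g i m ≠ 0 ∧ m ∈ degreeLE g i := by
  obtain ⟨i, hi, hmax⟩ := Set.exists_max_image _ id hfin hm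
  exact ⟨i, hi, mem_degreeLE.2 fun j hj ↦ by_contra fun hj' ↦ (hmax j hj').not_gt hj⟩

variable {N : ∀ i, Submodule R (P i)} {s : ∀ i, N i →ₗ[R] M}

lemma injective_toModule_of_sections (hs : ∀ i x, s i x ∈ degreeLE g i)
    (hgs : ∀ i x, g i (s i x) = x) : Function.Injective (toModule R ι M s) := by
  classical
  refine (injective_iff_map_eq_zero _).2 fun x hx ↦ by_contra fun hne ↦ ?_
  have hsupp : x.support.Nonempty := by simpa [Finset.nonempty_iff_ne_empty] using hne
  set k := x.support.max' hsupp
  have hlower : ∀ i ∈ x.support, i ≠ k → g k (s i (x i)) = 0 := fun i hi hik ↦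
    mem_degreeLE.1 (hs i _) k ((x.support.le_max' i hi).lt_of_ne hik)
  have hk : k ∈ x.support := x.support.max'_mem hsupp
  have hlead : g k (toModule R ι M s x) = x k := by
    rw [← hgs, ← Finset.sum_eq_single_of_mem k hk hlower, ← map_sum]
    exact congrArg (g k) (DFinsupp.sumAddHom_apply _ _)
  exact DFinsupp.mem_support_iff.1 hk (Subtype.ext (by rw [← hlead, hx, map_zero]; rfl))

lemma surjective_toModule_of_sections [WellFoundedLT ι]
    {s : ∀ i, leadingCoeffs g i →ₗ[R] M} (hfin : ∀ m, {i | g i m ≠ 0}.Finite)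
    (hinj : ∀ m, (∀ i, g i m = 0) → m = 0) (hs : ∀ i x, s i x ∈ degreeLE g i)
    (hgs : ∀ i x, g i (s i x) = x) : Function.Surjective (toModule R ι M s) := by
  have hrange : ∀ i, ∀ m ∈ degreeLE g i, m ∈ LinearMap.range (toModule R ι M s) := by
    intro i
    induction i using WellFoundedLT.induction with | _ i ih
    intro m hm
    let c : leadingCoeffs g i := ⟨g i m, m, hm, rfl⟩
    have hc : s i c ∈ LinearMap.range (toModule R ι M s) := ⟨lof R ι _ i c, toModule_lof _ _ _⟩
    suffices m - s i c ∈ LinearMap.range (toModule R ι M s) by simpa using add_mem this hc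
    by_cases hzero : ∀ j, g j (m - s i c) = 0
    · rw [hinj _ hzero]
      exact zero_mem _
    obtain ⟨j, hj, hdeg⟩ := exists_mem_degreeLE (hfin _) (not_forall.1 hzero)
    refine ih j (lt_of_not_ge fun hij ↦ hj ?_) _ hdeg
    obtain rfl | hij := hij.eq_or_lt
    · simp [hgs, c]
    · exact mem_degreeLE.1 (sub_mem hm (hs i c)) j hij
  intro m
  by_cases hzero : ∀ j, g j m = 0
  · exact ⟨0, by rw [hinj m hzero, map_zero]⟩
  · obtain ⟨i, -, hi⟩ := exists_mem_degreeLE (hfin m) (not_forall.1 hzero)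
    exact hrange i m hi

end LeadingCoeff

theorem exists_linearEquiv_directSum_submodule (hP : ∀ i, IsHereditaryModule R (P i))
    (g : ∀ i, M →ₗ[R] P i) (hfin : ∀ m, {i | g i m ≠ 0}.Finite)
    (hinj : ∀ m, (∀ i, g i m = 0) → m = 0) :
    ∃ N : ∀ i, Submodule R (P i), Nonempty (M ≃ₗ[R] ⨁ i, N i) := by
  obtain ⟨_, _⟩ := exists_wellFoundedLT ι
  choose s hs hgs using fun i ↦ exists_section_leadingCoeffs (g := g) (hP i)
  exact ⟨leadingCoeffs g, ⟨.symm <| .ofBijective (toModule R ι M s)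
    ⟨injective_toModule_of_sections hs hgs, surjective_toModule_of_sections hfin hinj hs hgs⟩⟩⟩

theorem projective_of_isHereditaryModule (hP : ∀ i, IsHereditaryModule R (P i))
    (g : ∀ i, M →ₗ[R] P i) (hfin : ∀ m, {i | g i m ≠ 0}.Finite)
    (hinj : ∀ m, (∀ i, g i m = 0) → m = 0) : Module.Projective R M := by
  obtain ⟨N, ⟨e⟩⟩ := exists_linearEquiv_directSum_submodule hP g hfin hinj
  have (i : ι) : Module.Projective R (N i) := hP i (N i)
  exact .of_equiv e.symm

end Hereditary

theorem isHereditaryModule_of_finite_of_isTorsionFree (D P : Type*) [CommRing D]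
    [IsDedekindDomain D] [AddCommGroup P] [Module D P] [Module.Finite D P]
    [Module.IsTorsionFree D P] : IsHereditaryModule D P := fun N ↦
  have := Module.finitePresentation_of_finite D N
  Module.Flat.projective_of_finitePresentation

theorem free_of_injective_of_pid {R M F : Type*} [CommRing R] [IsDomain R] [IsPrincipalIdealRing R]
    [AddCommGroup M] [Module R M] [AddCommGroup F] [Module R F] [Module.Free R F]
    (f : M →ₗ[R] F) (hf : Function.Injective f) : Module.Free R M := by
  let b := Module.Free.chooseBasis R F
  obtain ⟨N, ⟨e⟩⟩ := exists_linearEquiv_directSum_submodule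
    (fun _ ↦ isHereditaryModule_of_finite_of_isTorsionFree R R) (fun i ↦ b.coord i ∘ₗ f)
    (fun m ↦ (b.repr (f m)).hasFiniteSupport)
    (fun m hm ↦ hf ((b.forall_coord_eq_zero_iff.1 hm).trans (map_zero f).symm))
  exact .of_equiv e.symm

theorem free_restrictScalars_of_projective (R D M : Type*) [CommRing R] [IsDomain R]
    [IsPrincipalIdealRing R] [Ring D] [Algebra R D] [Module.Free R D] [AddCommGroup M]
    [Module R M] [Module D M] [IsScalarTower R D M] [Module.Projective D M] :
    Module.Free R M := by
  obtain ⟨s, hs⟩ := ‹Module.Projective D M›.out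
  exact free_of_injective_of_pid (s.restrictScalars R) hs.injective

section Dedekind

variable {R D M Q : Type*} [CommRing R] [CommRing D] [Algebra R D] [AddCommGroup M]
  [Module R M] [Module D M] [IsScalarTower R D M] [AddCommGroup Q] [Module R Q]

variable (D) in
/-- The map `m ↦ (d ↦ φ (d • m))` corresponding to the `R`-linear map `φ` under the adjunction
between restriction and coinduction of scalars along `R → D`. -/
def orbitMap (φ : M →ₗ[R] Q) : M →ₗ[R] D →ₗ[R] Q :=
  LinearMap.compRight R φ ∘ₗ (Algebra.lsmul R R M).toLinearMap.flip

@[simp]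
lemma orbitMap_apply (φ : M →ₗ[R] Q) (m : M) (d : D) : orbitMap D φ m d = φ (d • m) := rfl

variable (D) in
/-- The largest `D`-submodule contained in the kernel of the `R`-linear map `φ`. It is the
kernel of `orbitMap D φ`, so that `M ⧸ kerCore D φ` embeds into `D →ₗ[R] Q`; working with this
quotient avoids putting a `D`-module structure on `D →ₗ[R] Q`. -/
def kerCore (φ : M →ₗ[R] Q) : Submodule D M where
  __ := LinearMap.ker (orbitMap D φ)
  smul_mem' c m hm := LinearMap.ext fun d ↦ by
    simpa [mul_smul] using LinearMap.congr_fun (LinearMap.mem_ker.1 hm) (d * c)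

lemma mem_kerCore {φ : M →ₗ[R] Q} {m : M} : m ∈ kerCore D φ ↔ ∀ d : D, φ (d • m) = 0 :=
  LinearMap.ext_iff

lemma finite_quotient_kerCore [IsNoetherianRing R] [Module.Finite R D] [Module.Finite R Q]
    (φ : M →ₗ[R] Q) : Module.Finite D (M ⧸ kerCore D φ) :=
  have : Module.Finite R (M ⧸ kerCore D φ) :=
    .equiv ((orbitMap D φ).quotKerEquivRange.symm.trans
      (Submodule.Quotient.restrictScalarsEquiv R (kerCore D φ)))
  .of_restrictScalars_finite R D _

lemma isTorsionFree_quotient_kerCore [IsDomain R] [IsDomain D] [Algebra.IsAlgebraic R D]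
    [Module.IsTorsionFree R Q] (φ : M →ₗ[R] Q) :
    Module.IsTorsionFree D (M ⧸ kerCore D φ) := by
  refine .of_smul_eq_zero fun d x hdx ↦ or_iff_not_imp_left.2 fun hd ↦ ?_
  induction x using Submodule.Quotient.induction_on with | _ m
  obtain ⟨r, hr, c, hc⟩ := (Algebra.IsAlgebraic.isAlgebraic (R := R) d).exists_nonzero_dvd
    (mem_nonZeroDivisors_of_ne_zero hd)
  rw [← Submodule.Quotient.mk_smul, Submodule.Quotient.mk_eq_zero, mem_kerCore] at hdx
  refine (Submodule.Quotient.mk_eq_zero _).2 (mem_kerCore.2 fun e ↦ ?_)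
  have hre : r • φ (e • m) = 0 := by
    rw [← map_smul, algebra_compatible_smul D r, hc, smul_smul, ← hdx (c * e), smul_smul]
    congr 2
    ring
  exact (smul_eq_zero.1 hre).resolve_left hr

lemma finite_setOf_notMem_kerCore [Module.Finite R D] {ι : Type*} (f : M →ₗ[R] ι →₀ Q)
    (m : M) : {i | m ∉ kerCore D (Finsupp.lapply i ∘ₗ f)}.Finite := by
  obtain ⟨T, hT⟩ := Module.Finite.fg_top (R := R) (M := D)
  refine (T.finite_toSet.biUnion fun t _ ↦ (f (t • m)).hasFiniteSupport).subset fun i hi ↦ ?_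
  by_contra hvanish
  have hT_zero : Set.EqOn (orbitMap D (Finsupp.lapply i ∘ₗ f) m) (0 : D →ₗ[R] Q) T := fun t ht ↦
    of_not_not fun hne ↦ hvanish (Set.mem_biUnion ht hne)
  exact hi (LinearMap.ext_on hT hT_zero)

variable (R) in
theorem projective_of_projective_restrictScalars [IsDomain R] [IsNoetherianRing R]
    [IsDedekindDomain D] [Module.Finite R D] [Module.Projective R M] :
    Module.Projective D M := by
  obtain ⟨s, hs⟩ := ‹Module.Projective R M›.out
  let φ (i : M) : M →ₗ[R] R := Finsupp.lapply i ∘ₗ s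
  have hhereditary (i : M) : IsHereditaryModule D (M ⧸ kerCore D (φ i)) :=
    have := finite_quotient_kerCore (D := D) (φ i)
    have := isTorsionFree_quotient_kerCore (D := D) (φ i)
    isHereditaryModule_of_finite_of_isTorsionFree D _
  refine projective_of_isHereditaryModule hhereditary (fun i ↦ (kerCore D (φ i)).mkQ)
    (fun m ↦ ?_) fun m hm ↦ ?_
  · simpa using finite_setOf_notMem_kerCore (D := D) s m
  · refine hs.injective (Finsupp.ext fun i ↦ ?_)
    have hmem : m ∈ kerCore D (φ i) := (Submodule.Quotient.mk_eq_zero _).1 (hm i)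
    simpa [φ] using mem_kerCore.1 hmem 1

end Dedekind

theorem projective_iff_free_of_isDedekindDomain (R D M : Type*) [CommRing R] [IsDomain R]
    [IsPrincipalIdealRing R] [CommRing D] [IsDedekindDomain D] [Algebra R D] [Module.Finite R D]
    [Module.IsTorsionFree R D] [AddCommGroup M] [Module R M] [Module D M] [IsScalarTower R D M] :
    Module.Projective D M ↔ Module.Free R M :=
  ⟨fun _ ↦ free_restrictScalars_of_projective R D M,
    fun _ ↦ projective_of_projective_restrictScalars R⟩

lemma isDedekindDomain_of_ringEquiv {A B : Type*} [CommRing A] [CommRing B] [IsDedekindDomain A]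
    (e : A ≃+* B) : IsDedekindDomain B :=
  have := e.symm.toMulEquiv.isDomain
  have := isNoetherianRing_of_ringEquiv A e
  have := Ring.DimensionLEOne.of_ringEquiv e.symm
  have := IsIntegrallyClosed.of_equiv e
  { }

lemma isDedekindDomain_adjoin_of_isPrimitiveRoot {L : Type*} [Field L] [CharZero L] {n : ℕ}
    [NeZero n] {ζ : L} (hζ : IsPrimitiveRoot ζ n) : IsDedekindDomain (Algebra.adjoin ℤ {ζ}) := by
  have hint : IsIntegral ℚ ζ := (hζ.isIntegral (NeZero.pos n)).tower_top
  have : IsCyclotomicExtension {n} ℚ ℚ⟮ζ⟯ := by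
    change IsCyclotomicExtension {n} ℚ ℚ⟮ζ⟯.toSubalgebra
    rw [adjoin_simple_toSubalgebra_of_isAlgebraic hint.isAlgebraic]
    exact hζ.adjoin_isCyclotomicExtension ℚ
  have hgen : IsPrimitiveRoot (AdjoinSimple.gen ℚ ζ) n := by
    rwa [← IsPrimitiveRoot.coe_submonoidClass_iff]
  have := IsCyclotomicExtension.Rat.isIntegralClosure_adjoin_singleton hgen
  have := adjoin.finiteDimensional hint
  have := IsIntegralClosure.isDedekindDomain ℤ ℚ ℚ⟮ζ⟯ (Algebra.adjoin ℤ {AdjoinSimple.gen ℚ ζ})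
  let ι : ℚ⟮ζ⟯ →ₐ[ℤ] L := ℚ⟮ζ⟯.val.restrictScalars ℤ
  have hmap : (Algebra.adjoin ℤ {AdjoinSimple.gen ℚ ζ}).map ι = Algebra.adjoin ℤ {ζ} := by
    simp [ι, AlgHom.map_adjoin_singleton]
  exact isDedekindDomain_of_ringEquiv
    (((Algebra.adjoin ℤ {AdjoinSimple.gen ℚ ζ}).equivMapOfInjective ι ℚ⟮ζ⟯.val.injective).trans
      (Subalgebra.equivOfEq _ _ hmap)).toRingEquiv

theorem stmt_10_general {n : ℕ} [NeZero n] {L : Type*} [Field L] [CharZero L] {ζ : L}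
    (hζ : IsPrimitiveRoot ζ n) (M : Type*) [AddCommGroup M]
    [Module (Algebra.adjoin ℤ ({ζ} : Set L)) M] :
    Module.Projective (Algebra.adjoin ℤ ({ζ} : Set L)) M ↔ Module.Free ℤ M := by
  have := isDedekindDomain_adjoin_of_isPrimitiveRoot hζ
  have : Module.Finite ℤ (Algebra.adjoin ℤ ({ζ} : Set L)) :=
    .of_fg (hζ.isIntegral (NeZero.pos n)).fg_adjoin_singleton
  exact projective_iff_free_of_isDedekindDomain ℤ (Algebra.adjoin ℤ ({ζ} : Set L)) M

/-- Let `ϑ_n ∈ ℂ` be a primitive `n`-th root of unity and `D = ℤ[ϑ_n]` the subring of `ℂ`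
it generates (the ring of integers of the `n`-th cyclotomic field).  A countable
`D`-module `M` is projective over `D` if and only if its underlying additive group is a
free abelian group. -/
theorem stmt_10 (n : ℕ) (hn : 1 ≤ n) (ϑ : ℂ) (hϑ : IsPrimitiveRoot ϑ n)
    (M : Type) [AddCommGroup M] [Module (Algebra.adjoin ℤ ({ϑ} : Set ℂ)) M]
    [Countable M] :
    Module.Projective (Algebra.adjoin ℤ ({ϑ} : Set ℂ)) M ↔ Module.Free ℤ M := by
  have : NeZero n := ⟨Nat.one_le_iff_ne_zero.1 hn⟩
  exact stmt_10_general hϑ M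
end

section
/- Let C be a triangulated category admitting countable coproducts. Then C is idempotent complete (Karoubian): every idempotent endomorphism p : A → A (with p ∘ p = p) splits, i.e., there exist an object B and morphisms r : A → B, s : B → A with r ∘ s = id_B and s ∘ r = p. In particular, any triangulated subcategory of C closed under countable coproducts is closed under direct summands. -/
open CategoryTheory CategoryTheory.Pretriangulated CategoryTheory.Limits

universe v u

/-!
The image of an idempotent `p : A ⟶ A` is the colimit of `A ⟶ A ⟶ A ⟶ ⋯` with all transition maps
`p`, that is, the cokernel of `1 - p ∘ shift` on the coproduct of countably many copies of `A`.
Because `p` is idempotent this endomorphism is a split monomorphism, and in a pretriangulated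
category the cone of a monomorphism is its cokernel; so the colimit exists although general
cokernels do not.
-/

section Telescope

variable {C : Type u} [Category.{v} C] [Preadditive C] {A : C} [HasCoproduct fun _ : ℕ => A]

/-- The endomorphism `1 - p ∘ shift` of `A ⊕ A ⊕ ⋯`, whose cokernel is the colimit of the sequence
`A ⟶ A ⟶ ⋯` with all transition maps equal to `p`. -/
noncomputable def telescope (p : A ⟶ A) : (∐ fun _ : ℕ => A) ⟶ ∐ fun _ : ℕ => A :=
  Sigma.desc fun n => Sigma.ι (fun _ : ℕ => A) n - p ≫ Sigma.ι (fun _ : ℕ => A) (n + 1)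

theorem ι_telescope_assoc (p : A ⟶ A) (n : ℕ) {Y : C} (f : (∐ fun _ : ℕ => A) ⟶ Y) :
    Sigma.ι (fun _ : ℕ => A) n ≫ telescope p ≫ f =
      Sigma.ι (fun _ : ℕ => A) n ≫ f - p ≫ Sigma.ι (fun _ : ℕ => A) (n + 1) ≫ f := by
  simp only [telescope, Sigma.ι_desc_assoc, Preadditive.sub_comp, Category.assoc]

theorem telescope_comp_eq_zero_iff {p : A ⟶ A} {Y : C} {f : (∐ fun _ : ℕ => A) ⟶ Y} :
    telescope p ≫ f = 0 ↔
      ∀ n, Sigma.ι (fun _ : ℕ => A) n ≫ f = p ≫ Sigma.ι (fun _ : ℕ => A) (n + 1) ≫ f := by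
  refine ⟨fun h n => ?_, fun h => Sigma.hom_ext _ _ fun n => ?_⟩
  · rw [← sub_eq_zero, ← ι_telescope_assoc, h, comp_zero]
  · rw [ι_telescope_assoc, comp_zero, sub_eq_zero, h n]

/-- A left inverse of `telescope p` for idempotent `p`. On the part of `A ⊕ A ⊕ ⋯` where `p` is
zero it is the identity; on the part where `p` is the identity it sends the `n`-th summand to minus
the sum of the inclusions with index `< n`. -/
noncomputable def telescopeRetraction (p : A ⟶ A) : (∐ fun _ : ℕ => A) ⟶ ∐ fun _ : ℕ => A :=
  Sigma.desc fun n => (𝟙 A - p) ≫ Sigma.ι (fun _ : ℕ => A) n -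
    p ≫ ∑ k ∈ Finset.range n, Sigma.ι (fun _ : ℕ => A) k

theorem telescope_comp_telescopeRetraction {p : A ⟶ A} (hp : p ≫ p = p) :
    telescope p ≫ telescopeRetraction p = 𝟙 _ := by
  refine Sigma.hom_ext _ _ fun n => ?_
  rw [ι_telescope_assoc, telescopeRetraction, Sigma.ι_desc, Sigma.ι_desc, Finset.sum_range_succ]
  simp only [Preadditive.comp_sub, Preadditive.comp_add, Preadditive.sub_comp, ← Category.assoc, hp,
    Category.id_comp, Category.comp_id]
  abel

theorem mono_telescope {p : A ⟶ A} (hp : p ≫ p = p) : Mono (telescope p) :=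
  (SplitMono.mk _ (telescope_comp_telescopeRetraction hp)).mono

theorem comp_ι_comp_of_telescope_comp_eq_zero {p : A ⟶ A} (hp : p ≫ p = p) {Y : C}
    {f : (∐ fun _ : ℕ => A) ⟶ Y} (hf : telescope p ≫ f = 0) (n : ℕ) :
    p ≫ Sigma.ι (fun _ : ℕ => A) n ≫ f = Sigma.ι (fun _ : ℕ => A) n ≫ f := by
  rw [telescope_comp_eq_zero_iff.1 hf n, reassoc_of% hp]

theorem ι_comp_eq_ι_zero_comp_of_telescope_comp_eq_zero {p : A ⟶ A} (hp : p ≫ p = p) {Y : C}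
    {f : (∐ fun _ : ℕ => A) ⟶ Y} (hf : telescope p ≫ f = 0) (n : ℕ) :
    Sigma.ι (fun _ : ℕ => A) n ≫ f = Sigma.ι (fun _ : ℕ => A) 0 ≫ f := by
  induction n with
  | zero => rfl
  | succ n ih =>
    rw [← ih, telescope_comp_eq_zero_iff.1 hf n, comp_ι_comp_of_telescope_comp_eq_zero hp hf]

theorem exists_split_of_hasCokernel_telescope {p : A ⟶ A} (hp : p ≫ p = p)
    [HasCokernel (telescope p)] :
    ∃ (B : C) (r : A ⟶ B) (s : B ⟶ A), s ≫ r = 𝟙 B ∧ r ≫ s = p := by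
  have telescope_fold : telescope p ≫ Sigma.desc (fun _ : ℕ => p) = 0 :=
    telescope_comp_eq_zero_iff.2 fun n => by rw [Sigma.ι_desc, Sigma.ι_desc, hp]
  have telescope_π : telescope p ≫ cokernel.π (telescope p) = 0 := cokernel.condition _
  refine ⟨cokernel (telescope p), Sigma.ι (fun _ : ℕ => A) 0 ≫ cokernel.π (telescope p),
    cokernel.desc _ _ telescope_fold, ?_, ?_⟩
  · refine coequalizer.hom_ext (Sigma.hom_ext _ _ fun n => ?_)
    rw [cokernel.π_desc_assoc, Sigma.ι_desc_assoc, Category.comp_id,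
      comp_ι_comp_of_telescope_comp_eq_zero hp telescope_π,
      ι_comp_eq_ι_zero_comp_of_telescope_comp_eq_zero hp telescope_π n]
  · rw [Category.assoc, cokernel.π_desc, Sigma.ι_desc]

end Telescope

section Pretriangulated

variable {C : Type u} [Category.{v} C] [HasZeroObject C] [Preadditive C] [HasShift C ℤ]
  [∀ m : ℤ, (shiftFunctor C m).Additive] [Pretriangulated C]

theorem hasCokernel_of_mono {X Y : C} (f : X ⟶ Y) [Mono f] : HasCokernel f := by
  obtain ⟨Z, g, δ, hT⟩ := distinguished_cocone_triangle f
  have δ_eq_zero : δ = 0 := Triangle.mor₃_eq_zero_of_mono₁ _ hT ‹Mono f›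
  have : Epi g := Triangle.epi₂ _ hT δ_eq_zero
  have factors {W : C} (k : Y ⟶ W) (hk : f ≫ k = 0) : ∃ l : Z ⟶ W, k = g ≫ l :=
    Triangle.yoneda_exact₂ _ hT k hk
  exact ⟨⟨_, CokernelCofork.IsColimit.ofπ' g (comp_distTriang_mor_zero₁₂ _ hT)
    fun k hk => ⟨(factors k hk).choose, (factors k hk).choose_spec.symm⟩⟩⟩

theorem stmt_12_general {A : C} [HasCoproduct fun _ : ℕ => A] {p : A ⟶ A} (hp : p ≫ p = p) :
    ∃ (B : C) (r : A ⟶ B) (s : B ⟶ A), s ≫ r = 𝟙 B ∧ r ≫ s = p := by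
  have := mono_telescope hp
  have := hasCokernel_of_mono (telescope p)
  exact exists_split_of_hasCokernel_telescope hp

end Pretriangulated

/-- A triangulated category admitting countable coproducts is idempotent complete
(Karoubian): every idempotent endomorphism `p : A → A` splits, i.e. there are an object
`B` and morphisms `r : A → B`, `s : B → A` with `r ∘ s = id_B` and `s ∘ r = p`. -/
theorem stmt_12 (C : Type u) [Category.{v} C] [HasZeroObject C] [Preadditive C]
    [HasShift C ℤ] [∀ m : ℤ, (shiftFunctor C m).Additive] [Pretriangulated C]
    [IsTriangulated C] [HasCountableCoproducts C] :
    ∀ (A : C) (p : A ⟶ A), p ≫ p = p →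
      ∃ (B : C) (r : A ⟶ B) (s : B ⟶ A), s ≫ r = 𝟙 B ∧ r ≫ s = p :=
  fun _ _ hp => stmt_12_general hp
end
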